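/- arXiv:2502.17969 — 8 statements merged into one kernel-verified Lean document; each statement's English description precedes it below -/
import Mathlib

section
/- Let d ≥ 1 be an integer and C ≥ 1 a real constant, and let Λ be a set of nonnegative real numbers such that for every real y ≥ 1 the set {λ ∈ Λ : λ ≤ y} is finite and has cardinality at most C·y^d. Then there exist constants κ > 0 and K > 0, depending only on C and d, and a strictly increasing sequence (c_k)_{k≥1} of nonnegative real numbers with c₁ = 0, such that: (i) Λ ⊆ ⋃_{k≥1} [c_{2k−1}, c_{2k}); (ii) for every integer k ≥ 1, c_{2k+1} − c_{2k} ≥ κ·k^{−d}; (iii) for every integer k ≥ 1, |c_{2k} − k| + |c_{2k} − c_{2k−1}| ≤ K. -/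
/-!
Between consecutive integers `k` and `k + 1` the counting bound allows only `N = O(k ^ d)` points
of `Λ`, so among `N + 1` disjoint intervals of length `1 / (N + 2)` inside `[k, k + 1)` one misses
`Λ` altogether (`exists_free_piece`, `exists_gap`). Taking such an interval `[a k, b k)` as the
`k`-th gap, that is `c (2 * k) = a k` and `c (2 * k + 1) = b k`, gives a gap of the required length
in each unit interval, hence clusters of length less than `2` with `c (2 * k)` within `1` of `k`.
-/

/-- Pigeonhole: `N + 1` consecutive half-open intervals of length `1 / (N + 2)` starting at `t`
cannot all meet a set of at most `N` points. -/
theorem exists_free_piece (S : Finset ℝ) (t : ℝ) (N : ℕ) (hN : S.card ≤ N) :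
    ∃ j : ℕ, j ≤ N ∧ ∀ x ∈ S,
      ¬ (t + j / ((N : ℝ) + 2) ≤ x ∧ x < t + (j + 1) / ((N : ℝ) + 2)) := by
  by_contra! h
  have hsub : Finset.range (N + 1) ⊆ S.image (fun x => ⌊(x - t) * ((N : ℝ) + 2)⌋₊) := by
    intro j hj
    obtain ⟨x, hx, h1, h2⟩ := h j (Nat.lt_succ_iff.mp (Finset.mem_range.mp hj))
    refine Finset.mem_image.mpr ⟨x, hx, ?_⟩
    have hp : (0 : ℝ) < (N : ℝ) + 2 := by positivity
    have h1' : (j : ℝ) ≤ (x - t) * ((N : ℝ) + 2) := (div_le_iff₀ hp).mp (by linarith)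
    have h2' : (x - t) * ((N : ℝ) + 2) < (j : ℝ) + 1 := (lt_div_iff₀ hp).mp (by linarith)
    exact (Nat.floor_eq_iff (le_trans (Nat.cast_nonneg j) h1')).mpr ⟨h1', h2'⟩
  have h1 := Finset.card_le_card hsub
  have h2 := S.card_image_le (f := fun x => ⌊(x - t) * ((N : ℝ) + 2)⌋₊)
  rw [Finset.card_range] at h1
  omega

/-- Under the counting bound, each `[k, k + 1)` with `k ≥ 1` contains an interval `[a, b)` that is
free of points of `Λ` and has length at least a constant times `k ^ (-d)`. -/
theorem exists_gap (d : ℕ) (C : ℝ) (hC : 1 ≤ C) (Λ : Set ℝ)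
    (hΛ : ∀ y : ℝ, 1 ≤ y →
      {x ∈ Λ | x ≤ y}.Finite ∧ ({x ∈ Λ | x ≤ y}.ncard : ℝ) ≤ C * y ^ d)
    (k : ℕ) (hk : 1 ≤ k) :
    ∃ a b : ℝ, (k : ℝ) ≤ a ∧ a < b ∧ b < k + 1 ∧
      1 / (C * 2 ^ d + 2) / (k : ℝ) ^ d ≤ b - a ∧ ∀ x ∈ Λ, ¬ (a ≤ x ∧ x < b) := by
  have hk' : (1 : ℝ) ≤ k := by exact_mod_cast hk
  obtain ⟨hfin, hcard⟩ := hΛ ((k : ℝ) + 1) (by linarith)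
  rw [Set.ncard_eq_toFinset_card _ hfin] at hcard
  obtain ⟨j, hj, hfree⟩ := exists_free_piece hfin.toFinset k _ le_rfl
  set N := hfin.toFinset.card
  have hp : (0 : ℝ) < (N : ℝ) + 2 := by positivity
  have hj' : (j : ℝ) ≤ N := by exact_mod_cast hj
  have hb : ((j : ℝ) + 1) / ((N : ℝ) + 2) < 1 := by
    rw [div_lt_one hp]; linarith
  have hlen : ((j : ℝ) + 1) / ((N : ℝ) + 2) - j / ((N : ℝ) + 2) = 1 / ((N : ℝ) + 2) := by
    ring
  have hpos : 0 < 1 / ((N : ℝ) + 2) := by positivity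
  refine ⟨k + j / ((N : ℝ) + 2), k + (j + 1) / ((N : ℝ) + 2), ?_, by linarith, by linarith,
    ?_, ?_⟩
  · have : 0 ≤ (j : ℝ) / ((N : ℝ) + 2) := by positivity
    linarith
  · have hpow : ((k : ℝ) + 1) ^ d ≤ 2 ^ d * (k : ℝ) ^ d := by
      rw [← mul_pow]
      exact pow_le_pow_left₀ (by positivity) (by linarith) d
    have hone : (1 : ℝ) ≤ (k : ℝ) ^ d := one_le_pow₀ hk'
    have hmul : C * ((k : ℝ) + 1) ^ d ≤ C * (2 ^ d * (k : ℝ) ^ d) :=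
      mul_le_mul_of_nonneg_left hpow (by linarith)
    have hNle : (N : ℝ) + 2 ≤ (C * 2 ^ d + 2) * (k : ℝ) ^ d := by
      linarith
    have := one_div_le_one_div_of_le hp hNle
    rw [div_div]
    linarith
  · intro x hx hax
    exact hfree x (hfin.mem_toFinset.mpr ⟨hx, by linarith [hax.2]⟩) hax


/-- **Separation of a Weyl-counted set into clusters.**
Let `d ≥ 1` be an integer and `C ≥ 1` a real constant. Then there exist constants
`κ > 0` and `K > 0`, depending only on `C` and `d`, such that for every set `Λ` of
nonnegative real numbers satisfying, for every `y ≥ 1`, that `{λ ∈ Λ : λ ≤ y}` is finite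
with cardinality at most `C·y^d`, there is a strictly increasing nonnegative sequence
`(c_k)_{k ≥ 1}` with `c 1 = 0` such that
(i) `Λ ⊆ ⋃_{k ≥ 1} [c_{2k-1}, c_{2k})`;
(ii) `c_{2k+1} - c_{2k} ≥ κ · k^{-d}` for every `k ≥ 1`;
(iii) `|c_{2k} - k| + |c_{2k} - c_{2k-1}| ≤ K` for every `k ≥ 1`. -/
theorem cluster_decomposition_of_counting_bound
    (d : ℕ) (hd : 1 ≤ d) (C : ℝ) (hC : 1 ≤ C) :
    ∃ κ > (0 : ℝ), ∃ K > (0 : ℝ),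
      ∀ Λ : Set ℝ, (∀ x ∈ Λ, 0 ≤ x) →
        (∀ y : ℝ, 1 ≤ y →
          {x ∈ Λ | x ≤ y}.Finite ∧ ({x ∈ Λ | x ≤ y}.ncard : ℝ) ≤ C * y ^ d) →
        ∃ c : ℕ → ℝ,
          c 1 = 0 ∧
          (∀ k : ℕ, 1 ≤ k → 0 ≤ c k) ∧
          (∀ k : ℕ, 1 ≤ k → c k < c (k + 1)) ∧
          (Λ ⊆ ⋃ k ∈ Set.Ici 1, Set.Ico (c (2 * k - 1)) (c (2 * k))) ∧
          (∀ k : ℕ, 1 ≤ k → κ / (k : ℝ) ^ d ≤ c (2 * k + 1) - c (2 * k)) ∧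
          (∀ k : ℕ, 1 ≤ k → |c (2 * k) - (k : ℝ)| + |c (2 * k) - c (2 * k - 1)| ≤ K) := by
  have hCpos : (0 : ℝ) < C := by linarith
  refine ⟨1 / (C * 2 ^ d + 2), by positivity, 3, by norm_num, ?_⟩
  intro Λ hnonneg hΛ
  -- The index `k = 0` is included with `b 0 = 0`, so that `c 1 = b 0 = 0` is covered by the
  -- same formula as the other odd terms.
  have hex : ∀ k : ℕ, ∃ a b : ℝ, (k = 0 → b = 0) ∧ (k : ℝ) ≤ b ∧ b < k + 1 ∧
      (1 ≤ k → (k : ℝ) ≤ a ∧ a < b ∧ 1 / (C * 2 ^ d + 2) / (k : ℝ) ^ d ≤ b - a ∧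
        ∀ x ∈ Λ, ¬ (a ≤ x ∧ x < b)) := by
    intro k
    rcases Nat.eq_zero_or_pos k with rfl | hk
    · exact ⟨0, 0, by simp⟩
    · obtain ⟨a, b, h1, h2, h3, h4, h5⟩ := exists_gap d C hC Λ hΛ k hk
      exact ⟨a, b, by omega, by linarith, h3, fun _ => ⟨h1, h2, h4, h5⟩⟩
  choose a b hb0 hkb hbk hgap using hex
  have heven : ∀ k : ℕ, (if Even (2 * k) then a (2 * k / 2) else b (2 * k / 2)) = a k := by
    intro k
    rw [if_pos (even_two_mul k), Nat.mul_div_cancel_left k two_pos]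
  have hodd : ∀ k : ℕ,
      (if Even (2 * k + 1) then a ((2 * k + 1) / 2) else b ((2 * k + 1) / 2)) = b k := by
    intro k
    rw [if_neg (by simp), show (2 * k + 1) / 2 = k by omega]
  obtain ⟨c, hce, hco⟩ : ∃ c : ℕ → ℝ, (∀ k, c (2 * k) = a k) ∧ ∀ k, c (2 * k + 1) = b k :=
    ⟨fun n => if Even n then a (n / 2) else b (n / 2), heven, hodd⟩
  have hstep : ∀ k : ℕ, b k < a (k + 1) := by
    intro k
    have h := (hgap (k + 1) (by omega)).1
    push_cast at h
    linarith [hbk k]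
  refine ⟨c, (hco 0).trans (hb0 0 rfl), ?_, ?_, ?_, ?_, ?_⟩
  · intro n hn
    obtain ⟨k, rfl | rfl⟩ := Nat.even_or_odd' n
    · rw [hce]
      exact le_trans (Nat.cast_nonneg k) (hgap k (by omega)).1
    · rw [hco]
      exact le_trans (Nat.cast_nonneg k) (hkb k)
  · intro n hn
    obtain ⟨k, rfl | rfl⟩ := Nat.even_or_odd' n
    · rw [hce, hco]
      exact (hgap k (by omega)).2.1
    · rw [hco, show 2 * k + 1 + 1 = 2 * (k + 1) by ring, hce]
      exact hstep k
  · intro x hx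
    have hexists : ∃ k : ℕ, x < a (k + 1) := by
      obtain ⟨k, hk⟩ := exists_nat_gt x
      exact ⟨k, by linarith [hkb k, hstep k]⟩
    -- `x` lies in the cluster ending at the first `a (k + 1)` beyond it: it is at least `a k`,
    -- and the gap `[a k, b k)` contains no point of `Λ`.
    classical
    obtain ⟨k, hk, hmin⟩ : ∃ k : ℕ, x < a (k + 1) ∧ ∀ m < k, ¬ x < a (m + 1) :=
      ⟨Nat.find hexists, Nat.find_spec hexists, fun m hm => Nat.find_min hexists hm⟩
    have hbx : b k ≤ x := by
      rcases k with _ | m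
      · rw [hb0 0 rfl]
        exact hnonneg x hx
      · by_contra! hlt
        exact (hgap (m + 1) (by omega)).2.2.2 x hx
          ⟨not_lt.mp (hmin m (by omega)), hlt⟩
    refine Set.mem_biUnion (x := k + 1) (Set.mem_Ici.mpr (by omega)) ?_
    rw [show 2 * (k + 1) - 1 = 2 * k + 1 by omega, hce, hco]
    exact ⟨hbx, hk⟩
  · intro k hk
    rw [hce, hco]
    exact (hgap k hk).2.2.1
  · intro k hk
    obtain ⟨m, rfl⟩ : ∃ m, k = m + 1 := ⟨k - 1, by omega⟩
    rw [show 2 * (m + 1) - 1 = 2 * m + 1 by omega, hce, hco]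
    obtain ⟨h1, h2, -, -⟩ := hgap (m + 1) hk
    have h3 := hbk (m + 1)
    have h4 := hstep m
    have h5 := hkb m
    rw [abs_of_nonneg (by linarith), abs_of_nonneg (by linarith)]
    push_cast at *
    linarith
end

section
/- Let β, α, Υ > 0 and let ω : ℕ≥1 → (0, ∞) be a nondecreasing sequence such that there exist constants 0 < c₀ ≤ C₀ and λ₀ ≥ 1 with c₀·λ^β ≤ #{j ≥ 1 : ω_j ≤ λ} ≤ C₀·λ^β for all λ ≥ λ₀. Let ℕ≥1 = ⨆_{k≥1} 𝒞_k be a partition into (possibly empty) disjoint sets such that sup_{k≥1} sup_{j∈𝒞_k} |ω_j^{1/α} − Υk| < ∞. Then for every s ≥ 0 there exist constants 0 < c_s ≤ C_s such that for every sequence u : ℕ≥1 → ℂ one has c_s · ∑_{j≥1} j^{2s/(αβ)} |u_j|² ≤ ∑_{k≥1} k^{2s} ∑_{j∈𝒞_k} |u_j|² ≤ C_s · ∑_{j≥1} j^{2s/(αβ)} |u_j|², these (possibly infinite) sums of nonnegative terms being compared in [0, ∞]. -/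
/-! The Weyl law pins down `ω j` in terms of its index: monotonicity of `ω` puts `{1, …, j}` inside
`{i | ω i ≤ max (ω j) lam₀}`, while `{i | ω i ≤ lam} ⊆ {1, …, j - 1}` whenever `lam < ω j`; hence
`j ≤ C₀ * max (ω j) lam₀ ^ β` (`index_le_of_weyl`) and
`ω j ≤ max lam₀ ((j / c₀) ^ (1 / β))` (`freq_le_of_weyl`).
Since `ω j ^ (1 / α)` is within a bounded distance of `Υ * k` for `j ∈ 𝒞 k`, the numbers `k` and
`j ^ (1 / (α * β))` are comparable uniformly in `j ∈ 𝒞 k` (`exists_comparison`); all additive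
constants are absorbed because `j, k ≥ 1`. So the two norms are weighted `ℓ²` norms with comparable
weights, once the double sum over clusters is rewritten as a single sum over `j`
(`tsum_cluster_eq`).
-/

open scoped ENNReal NNReal

theorem index_le_of_weyl {β : ℝ} {ω : ℕ+ → ℝ} (hmono : Monotone ω) {C₀ lam₀ : ℝ}
    (hfin : ∀ lam : ℝ, lam₀ ≤ lam → {j : ℕ+ | ω j ≤ lam}.Finite)
    (hweyl : ∀ lam : ℝ, lam₀ ≤ lam → ({j : ℕ+ | ω j ≤ lam}.ncard : ℝ) ≤ C₀ * lam ^ β)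
    (j : ℕ+) : ((j : ℕ) : ℝ) ≤ C₀ * (max (ω j) lam₀) ^ β := by
  refine le_trans ?_ (hweyl _ (le_max_right _ _))
  have h1 : (Set.Icc 1 j : Set ℕ+) ⊆ {i : ℕ+ | ω i ≤ max (ω j) lam₀} :=
    fun i hi => le_max_of_le_left (hmono hi.2)
  have h2 := Set.ncard_le_ncard h1 (hfin _ (le_max_right _ _))
  rw [← Finset.coe_Icc, Set.ncard_coe_finset, PNat.card_Icc] at h2
  simp only [PNat.one_coe, Nat.add_sub_cancel] at h2
  exact_mod_cast h2

theorem freq_le_of_weyl {β : ℝ} (hβ : 0 < β) {ω : ℕ+ → ℝ} (hmono : Monotone ω) {c₀ lam₀ : ℝ}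
    (hc₀ : 0 < c₀)
    (hweyl : ∀ lam : ℝ, lam₀ ≤ lam → c₀ * lam ^ β ≤ ({j : ℕ+ | ω j ≤ lam}.ncard : ℝ))
    (j : ℕ+) : ω j ≤ max lam₀ ((((j : ℕ) : ℝ) / c₀) ^ (1 / β)) := by
  by_contra! hlt
  set lam := max lam₀ ((((j : ℕ) : ℝ) / c₀) ^ (1 / β)) with hlam
  have h0 : (0 : ℝ) ≤ ((j : ℕ) : ℝ) / c₀ := by positivity
  have h1 : {i : ℕ+ | ω i ≤ lam} ⊆ (Set.Ico 1 j : Set ℕ+) := by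
    intro i hi
    refine ⟨one_le, ?_⟩
    by_contra! hji
    exact absurd (lt_of_lt_of_le hlt (hmono hji)) (not_lt.mpr hi)
  have h2 := Set.ncard_le_ncard h1 (Set.finite_Ico _ _)
  rw [← Finset.coe_Ico, Set.ncard_coe_finset, PNat.card_Ico] at h2
  have hj : 0 < (j : ℕ) := j.pos
  have h3 : {i : ℕ+ | ω i ≤ lam}.ncard < (j : ℕ) := by
    simp only [PNat.one_coe] at h2
    omega
  have h4 : (({i : ℕ+ | ω i ≤ lam}.ncard : ℕ) : ℝ) < ((j : ℕ) : ℝ) := by exact_mod_cast h3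
  have h5 := hweyl lam (le_max_left _ _)
  have h6 : ((j : ℕ) : ℝ) / c₀ ≤ lam ^ β := by
    calc ((j : ℕ) : ℝ) / c₀ = ((((j : ℕ) : ℝ) / c₀) ^ (1 / β)) ^ β := by
          rw [← Real.rpow_mul h0, one_div_mul_cancel hβ.ne', Real.rpow_one]
      _ ≤ lam ^ β := Real.rpow_le_rpow (by positivity) (le_max_right _ _) hβ.le
  rw [div_le_iff₀ hc₀] at h6
  linarith

theorem max_rpow_le_add {a b p : ℝ} (ha : 0 ≤ a) (hb : 0 ≤ b) :
    (max a b) ^ p ≤ a ^ p + b ^ p := by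
  have h1 := Real.rpow_nonneg ha p
  have h2 := Real.rpow_nonneg hb p
  rcases max_choice a b with h | h <;> rw [h] <;> linarith

/-- The cluster label `k` and `j ^ (1 / (α * β))` are comparable, uniformly in `j ∈ 𝒞 k`. -/
theorem exists_comparison
    {β α Υ : ℝ} (hβ : 0 < β) (hα : 0 < α) (hΥ : 0 < Υ)
    {ω : ℕ+ → ℝ} (hpos : ∀ j, 0 < ω j) (hmono : Monotone ω)
    {c₀ C₀ lam₀ : ℝ} (hc₀ : 0 < c₀) (hc₀C₀ : c₀ ≤ C₀) (hlam₀ : 1 ≤ lam₀)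
    (hfin : ∀ lam : ℝ, lam₀ ≤ lam → {j : ℕ+ | ω j ≤ lam}.Finite)
    (hweyl : ∀ lam : ℝ, lam₀ ≤ lam →
      c₀ * lam ^ β ≤ ({j : ℕ+ | ω j ≤ lam}.ncard : ℝ) ∧
      ({j : ℕ+ | ω j ≤ lam}.ncard : ℝ) ≤ C₀ * lam ^ β)
    {𝒞 : ℕ+ → Set ℕ+} {Cb : ℝ}
    (hcluster : ∀ k : ℕ+, ∀ j ∈ 𝒞 k, |ω j ^ (1 / α) - Υ * (k : ℕ)| ≤ Cb) :
    ∃ A : ℝ, 1 ≤ A ∧ ∀ k : ℕ+, ∀ j ∈ 𝒞 k,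
      ((k : ℕ) : ℝ) ≤ A * ((j : ℕ) : ℝ) ^ (1 / (α * β)) ∧
      ((j : ℕ) : ℝ) ^ (1 / (α * β)) ≤ A * ((k : ℕ) : ℝ) := by
  have hC₀ : 0 < C₀ := hc₀.trans_le hc₀C₀
  have hl : 0 < lam₀ := by linarith
  set p := 1 / (α * β) with hp
  have hp0 : 0 < p := by positivity
  have hL : 0 ≤ lam₀ ^ (1 / α) := by positivity
  set L := lam₀ ^ (1 / α) with hLdef
  set A₁ := (L + (1 / c₀) ^ p + |Cb|) / Υ with hA₁
  set A₂ := C₀ ^ p * (L + Υ + |Cb|) with hA₂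
  refine ⟨max 1 (max A₁ A₂), le_max_left _ _, fun k j hj => ?_⟩
  have hj1 : (1 : ℝ) ≤ ((j : ℕ) : ℝ) := by exact_mod_cast j.pos
  have hk1 : (1 : ℝ) ≤ ((k : ℕ) : ℝ) := by exact_mod_cast k.pos
  have hjp : (1 : ℝ) ≤ ((j : ℕ) : ℝ) ^ p := Real.one_le_rpow hj1 hp0.le
  have hcl := abs_le.mp (hcluster k j hj)
  have hCb := le_abs_self Cb
  constructor
  · have h1 := freq_le_of_weyl hβ hmono hc₀ (fun lam h => (hweyl lam h).1) j
    have h2 : ω j ^ (1 / α) ≤ L + (1 / c₀) ^ p * ((j : ℕ) : ℝ) ^ p := by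
      calc ω j ^ (1 / α) ≤ (max lam₀ ((((j : ℕ) : ℝ) / c₀) ^ (1 / β))) ^ (1 / α) :=
            Real.rpow_le_rpow (hpos j).le h1 (by positivity)
        _ ≤ lam₀ ^ (1 / α) + ((((j : ℕ) : ℝ) / c₀) ^ (1 / β)) ^ (1 / α) :=
            max_rpow_le_add hl.le (by positivity)
        _ = L + (1 / c₀) ^ p * ((j : ℕ) : ℝ) ^ p := by
            rw [← Real.rpow_mul (by positivity), ← Real.mul_rpow (by positivity) (by positivity)]
            congr 2
            · ring
            · rw [hp]; field_simp
    have h3 : Υ * ((k : ℕ) : ℝ) ≤ (L + (1 / c₀) ^ p + |Cb|) * ((j : ℕ) : ℝ) ^ p := by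
      nlinarith [mul_le_mul_of_nonneg_left hjp (add_nonneg hL (abs_nonneg Cb))]
    calc ((k : ℕ) : ℝ) ≤ A₁ * ((j : ℕ) : ℝ) ^ p := by
          rw [hA₁, div_mul_eq_mul_div, le_div_iff₀ hΥ]; linarith
      _ ≤ _ := by
          gcongr
          exact (le_max_left _ _).trans (le_max_right _ _)
  · have h1 := index_le_of_weyl hmono hfin (fun lam h => (hweyl lam h).2) j
    have hm : 0 ≤ max (ω j) lam₀ := le_max_of_le_right hl.le
    have h2 : ((j : ℕ) : ℝ) ^ p ≤ C₀ ^ p * (ω j ^ (1 / α) + L) := by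
      calc ((j : ℕ) : ℝ) ^ p ≤ (C₀ * (max (ω j) lam₀) ^ β) ^ p :=
            Real.rpow_le_rpow (by positivity) h1 hp0.le
        _ = C₀ ^ p * (max (ω j) lam₀) ^ (1 / α) := by
            rw [Real.mul_rpow hC₀.le (by positivity), ← Real.rpow_mul hm]
            congr 2
            rw [hp]; field_simp
        _ ≤ C₀ ^ p * (ω j ^ (1 / α) + L) := by
            gcongr
            exact max_rpow_le_add (hpos j).le hl.le
    calc ((j : ℕ) : ℝ) ^ p ≤ C₀ ^ p * (ω j ^ (1 / α) + L) := h2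
      _ ≤ C₀ ^ p * ((L + Υ + |Cb|) * ((k : ℕ) : ℝ)) := by
          gcongr
          nlinarith [mul_le_mul_of_nonneg_left hk1 (add_nonneg hL (abs_nonneg Cb))]
      _ = A₂ * ((k : ℕ) : ℝ) := by rw [hA₂]; ring
      _ ≤ _ := by
          gcongr
          exact (le_max_right _ _).trans (le_max_right _ _)

/-- For a partition `𝒞` with label map `κ`, a weighted sum over clusters is a single sum. -/
theorem tsum_cluster_eq {𝒞 : ℕ+ → Set ℕ+} {κ : ℕ+ → ℕ+} (hκ : ∀ j k, j ∈ 𝒞 k ↔ k = κ j)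
    (w f : ℕ+ → ℝ≥0∞) :
    ∑' k : ℕ+, w k * ∑' j : 𝒞 k, f j = ∑' j : ℕ+, w (κ j) * f j := by
  classical
  simp_rw [tsum_subtype, ← ENNReal.tsum_mul_left]
  rw [ENNReal.tsum_comm]
  refine tsum_congr fun j => ?_
  rw [tsum_eq_single (κ j)]
  · rw [Set.indicator_of_mem ((hκ _ _).2 rfl)]
  · intro k hk
    rw [Set.indicator_of_notMem (fun h => hk ((hκ _ _).1 h)), mul_zero]

theorem ofReal_weight_le {a b : ℕ+} {A p q t : ℝ} (hA : 1 ≤ A) (ht : 0 ≤ t)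
    (h : ((a : ℕ) : ℝ) ^ p ≤ A * ((b : ℕ) : ℝ) ^ q) :
    ((a : ℕ) : ℝ≥0∞) ^ (p * t) ≤ ENNReal.ofReal (A ^ t) * ((b : ℕ) : ℝ≥0∞) ^ (q * t) := by
  have ha : (0 : ℝ) < ((a : ℕ) : ℝ) := by exact_mod_cast a.pos
  have hb : (0 : ℝ) < ((b : ℕ) : ℝ) := by exact_mod_cast b.pos
  rw [← ENNReal.ofReal_natCast, ← ENNReal.ofReal_natCast, ENNReal.ofReal_rpow_of_pos ha,
    ENNReal.ofReal_rpow_of_pos hb, ← ENNReal.ofReal_mul (by positivity)]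
  refine ENNReal.ofReal_le_ofReal ?_
  rw [Real.rpow_mul ha.le, Real.rpow_mul hb.le, ← Real.mul_rpow (by positivity) (by positivity)]
  exact Real.rpow_le_rpow (by positivity) h ht


open scoped ENNReal NNReal

/-- **Equivalence of the cluster Sobolev norms `H^s` and the discrete Sobolev norms
`h^{s/(αβ)}`.**  Let `β, α, Υ > 0` and let `ω : ℕ≥1 → (0,∞)` be nondecreasing satisfying a
two-sided Weyl law with exponent `β`.  Let `(𝒞_k)_{k ≥ 1}` be a partition of `ℕ≥1` such that
`ω_j^{1/α}` lies within a bounded distance of `Υk` for `j ∈ 𝒞_k`.  Then for every `s ≥ 0`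
there are constants `0 < c_s ≤ C_s` such that for every `u : ℕ≥1 → ℂ`,
`c_s · ∑_j j^{2s/(αβ)} |u_j|² ≤ ∑_k k^{2s} ∑_{j ∈ 𝒞_k} |u_j|² ≤ C_s · ∑_j j^{2s/(αβ)} |u_j|²`,
the (possibly infinite) sums being compared in `[0,∞]`. -/
theorem cluster_sobolev_norm_equivalence
    (β α Υ : ℝ) (hβ : 0 < β) (hα : 0 < α) (hΥ : 0 < Υ)
    (ω : ℕ+ → ℝ) (hpos : ∀ j, 0 < ω j) (hmono : Monotone ω)
    (c₀ C₀ lam₀ : ℝ) (hc₀ : 0 < c₀) (hc₀C₀ : c₀ ≤ C₀) (hlam₀ : 1 ≤ lam₀)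
    (hfin : ∀ lam : ℝ, lam₀ ≤ lam → {j : ℕ+ | ω j ≤ lam}.Finite)
    (hweyl : ∀ lam : ℝ, lam₀ ≤ lam →
      c₀ * lam ^ β ≤ ({j : ℕ+ | ω j ≤ lam}.ncard : ℝ) ∧
      ({j : ℕ+ | ω j ≤ lam}.ncard : ℝ) ≤ C₀ * lam ^ β)
    (𝒞 : ℕ+ → Set ℕ+)
    (hpart : ∀ j : ℕ+, ∃! k : ℕ+, j ∈ 𝒞 k)
    (Cb : ℝ)
    (hcluster : ∀ k : ℕ+, ∀ j ∈ 𝒞 k, |ω j ^ (1 / α) - Υ * (k : ℕ)| ≤ Cb) :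
    ∀ s : ℝ, 0 ≤ s →
      ∃ cs Cs : ℝ, 0 < cs ∧ cs ≤ Cs ∧
        ∀ u : ℕ+ → ℂ,
          ENNReal.ofReal cs *
              ∑' j : ℕ+, ((j : ℕ) : ℝ≥0∞) ^ (2 * s / (α * β)) * (‖u j‖₊ : ℝ≥0∞) ^ 2
            ≤ ∑' k : ℕ+, ((k : ℕ) : ℝ≥0∞) ^ (2 * s) * ∑' j : 𝒞 k, (‖u (j : ℕ+)‖₊ : ℝ≥0∞) ^ 2 ∧
          ∑' k : ℕ+, ((k : ℕ) : ℝ≥0∞) ^ (2 * s) * ∑' j : 𝒞 k, (‖u (j : ℕ+)‖₊ : ℝ≥0∞) ^ 2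
            ≤ ENNReal.ofReal Cs *
              ∑' j : ℕ+, ((j : ℕ) : ℝ≥0∞) ^ (2 * s / (α * β)) * (‖u j‖₊ : ℝ≥0∞) ^ 2 := by
  intro s hs
  obtain ⟨A, hA, hcomp⟩ := exists_comparison hβ hα hΥ hpos hmono hc₀ hc₀C₀ hlam₀ hfin hweyl hcluster
  choose κ hκ huniq using hpart
  have hκ' : ∀ j k, j ∈ 𝒞 k ↔ k = κ j := fun j k => ⟨huniq j k, fun h => h ▸ hκ j⟩
  have ht : 0 ≤ 2 * s := by positivity
  have hA1 : 1 ≤ A ^ (2 * s) := Real.one_le_rpow hA ht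
  have hA0 : 0 < A ^ (2 * s) := by linarith
  have hexp : 1 / (α * β) * (2 * s) = 2 * s / (α * β) := by ring
  refine ⟨(A ^ (2 * s))⁻¹, A ^ (2 * s), by positivity, (inv_le_one_of_one_le₀ hA1).trans hA1,
    fun u => ?_⟩
  rw [tsum_cluster_eq hκ' (fun k => ((k : ℕ) : ℝ≥0∞) ^ (2 * s))
    (fun j => (‖u j‖₊ : ℝ≥0∞) ^ 2)]
  constructor
  · rw [ENNReal.ofReal_inv_of_pos hA0, ENNReal.inv_mul_le_iff
      (by simpa using hA0) ENNReal.ofReal_ne_top, ← ENNReal.tsum_mul_left]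
    refine ENNReal.tsum_le_tsum fun j => ?_
    rw [← mul_assoc]
    gcongr
    have := ofReal_weight_le (a := j) (b := κ j) (p := 1 / (α * β)) (q := 1) hA ht
      (by simpa only [Real.rpow_one] using (hcomp _ j (hκ j)).2)
    rwa [one_mul, hexp] at this
  · rw [← ENNReal.tsum_mul_left]
    refine ENNReal.tsum_le_tsum fun j => ?_
    rw [← mul_assoc]
    gcongr
    have := ofReal_weight_le (a := κ j) (b := j) (p := 1) (q := 1 / (α * β)) hA ht
      (by simpa only [Real.rpow_one] using (hcomp _ j (hκ j)).1)
    rwa [one_mul, hexp] at this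
end

section
/- Let β, α, Υ > 0 and let ω : ℕ≥1 → (0, ∞) be a nondecreasing sequence such that there exist constants 0 < c₀ ≤ C₀ and λ₀ ≥ 1 with c₀·λ^β ≤ #{j ≥ 1 : ω_j ≤ λ} ≤ C₀·λ^β for all λ ≥ λ₀. Let ℕ≥1 = ⨆_{k≥1} 𝒞_k be a partition into (possibly empty) disjoint sets such that sup_{k≥1} sup_{j∈𝒞_k} |ω_j^{1/α} − Υk| < ∞. Then there exist constants 0 < c ≤ C and K₀ ≥ 1 such that for every integer K ≥ K₀, c·K^{αβ} ≤ #(⋃_{k≤K} 𝒞_k) ≤ C·K^{αβ}. -/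
/-!
If `ω j ^ (1/α)` is within `Cb` of `Υ k`, then for `Υ K` large compared with `Cb` the union of the
first `K` clusters is squeezed between two sublevel sets of `ω`:
`{ω ≤ (Υ/2 · K)^α} ⊆ ⋃_{k ≤ K} 𝒞 k ⊆ {ω ≤ (2Υ · K)^α}`.
The Weyl law bounds the cardinality of both sides by constant multiples of `K^(αβ)`.
-/


/-- **Counting the indices in the first `K` clusters.**
Let `β, α, Υ > 0` and let `ω : ℕ≥1 → (0,∞)` be nondecreasing satisfying a two-sided Weyl
law with exponent `β`.  Let `(𝒞_k)_{k ≥ 1}` be a partition of `ℕ≥1` such that `ω_j^{1/α}`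
lies within a bounded distance of `Υk` for `j ∈ 𝒞_k`.  Then there exist constants
`0 < c ≤ C` and `K₀ ≥ 1` such that for every `K ≥ K₀`,
`c·K^{αβ} ≤ #(⋃_{k ≤ K} 𝒞_k) ≤ C·K^{αβ}`. -/
theorem card_union_clusters
    (β α Υ : ℝ) (hβ : 0 < β) (hα : 0 < α) (hΥ : 0 < Υ)
    (ω : ℕ+ → ℝ) (hpos : ∀ j, 0 < ω j) (hmono : Monotone ω)
    (c₀ C₀ lam₀ : ℝ) (hc₀ : 0 < c₀) (hc₀C₀ : c₀ ≤ C₀) (hlam₀ : 1 ≤ lam₀)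
    (hfin : ∀ lam : ℝ, lam₀ ≤ lam → {j : ℕ+ | ω j ≤ lam}.Finite)
    (hweyl : ∀ lam : ℝ, lam₀ ≤ lam →
      c₀ * lam ^ β ≤ ({j : ℕ+ | ω j ≤ lam}.ncard : ℝ) ∧
      ({j : ℕ+ | ω j ≤ lam}.ncard : ℝ) ≤ C₀ * lam ^ β)
    (𝒞 : ℕ+ → Set ℕ+)
    (hpart : ∀ j : ℕ+, ∃! k : ℕ+, j ∈ 𝒞 k)
    (Cb : ℝ)
    (hcluster : ∀ k : ℕ+, ∀ j ∈ 𝒞 k, |ω j ^ (1 / α) - Υ * (k : ℕ)| ≤ Cb) :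
    ∃ c C : ℝ, 0 < c ∧ c ≤ C ∧ ∃ K₀ : ℕ+, ∀ K : ℕ+, K₀ ≤ K →
      (⋃ k ∈ Set.Iic K, 𝒞 k).Finite ∧
      c * ((K : ℕ) : ℝ) ^ (α * β) ≤ ((⋃ k ∈ Set.Iic K, 𝒞 k).ncard : ℝ) ∧
      ((⋃ k ∈ Set.Iic K, 𝒞 k).ncard : ℝ) ≤ C * ((K : ℕ) : ℝ) ^ (α * β) := by
  -- This threshold gives `Cb ≤ Υ/2 · K` and puts both cut-offs `(Υ/2 · K)^α`, `(2Υ · K)^α`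
  -- in the range `≥ lam₀` of the Weyl law.
  obtain ⟨n, hn⟩ := exists_nat_ge (2 / Υ * (|Cb| + lam₀ ^ (1 / α)))
  refine ⟨c₀ * (Υ / 2) ^ (α * β), C₀ * (2 * Υ) ^ (α * β), by positivity, ?_,
    n.succPNat, fun K hK => ?_⟩
  · have : (Υ / 2) ^ (α * β) ≤ (2 * Υ) ^ (α * β) :=
      Real.rpow_le_rpow (by positivity) (by linarith) (by positivity)
    exact mul_le_mul hc₀C₀ this (by positivity) (by linarith)
  have hnK : (n : ℝ) ≤ ((K : ℕ) : ℝ) := by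
    have h : ((n.succPNat : ℕ+) : ℕ) ≤ (K : ℕ) := hK
    rw [Nat.succPNat_coe] at h
    exact_mod_cast (Nat.le_succ n).trans h
  have hKpos : (0 : ℝ) < ((K : ℕ) : ℝ) := by exact_mod_cast K.pos
  have hlam₀pos : 0 ≤ lam₀ := by linarith
  have hpow : 0 ≤ lam₀ ^ (1 / α) := Real.rpow_nonneg hlam₀pos _
  have hbig : |Cb| + lam₀ ^ (1 / α) ≤ Υ / 2 * (K : ℕ) := by
    have h := mul_le_mul_of_nonneg_left (hn.trans hnK) (by positivity : 0 ≤ Υ / 2)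
    have e : Υ / 2 * (2 / Υ * (|Cb| + lam₀ ^ (1 / α))) = |Cb| + lam₀ ^ (1 / α) := by
      field_simp
    rwa [e] at h
  have hCb := le_abs_self Cb
  have hCb0 := abs_nonneg Cb
  have hΥK : 0 < Υ * (K : ℕ) := by positivity
  have key : ∀ x : ℝ, 0 ≤ x → ∀ j, ω j ≤ x ^ α ↔ ω j ^ (1 / α) ≤ x := by
    intro x hx j
    rw [one_div, Real.rpow_inv_le_iff_of_pos (hpos j).le hx hα]
  have hlam : ∀ x : ℝ, lam₀ ^ (1 / α) ≤ x → lam₀ ≤ x ^ α := by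
    intro x hx
    rw [one_div] at hx hpow
    exact (Real.rpow_inv_le_iff_of_pos hlam₀pos (hpow.trans hx) hα).1 hx
  have hpw : ∀ a : ℝ, 0 ≤ a →
      ((a * ((K : ℕ) : ℝ)) ^ α) ^ β = a ^ (α * β) * ((K : ℕ) : ℝ) ^ (α * β) := by
    intro a ha
    rw [← Real.rpow_mul (by positivity), Real.mul_rpow ha hKpos.le]
  have hl1 : lam₀ ≤ (Υ / 2 * (K : ℕ)) ^ α := hlam _ (by linarith)
  have hl2 : lam₀ ≤ (2 * Υ * (K : ℕ)) ^ α := hlam _ (by linarith)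
  have hsub1 : {j : ℕ+ | ω j ≤ (Υ / 2 * (K : ℕ)) ^ α} ⊆ ⋃ k ∈ Set.Iic K, 𝒞 k := by
    intro j hj
    have hj' := (key _ (by positivity) j).1 hj
    obtain ⟨k, hk, -⟩ := hpart j
    have hc := (abs_le.1 (hcluster k j hk)).1
    have hkK : Υ * ((k : ℕ) : ℝ) ≤ Υ * ((K : ℕ) : ℝ) := by linarith
    have h2 : ((k : ℕ) : ℝ) ≤ ((K : ℕ) : ℝ) := le_of_mul_le_mul_left hkK hΥ
    have h3 : k ≤ K := by exact_mod_cast h2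
    exact Set.mem_biUnion (Set.mem_Iic.2 h3) hk
  have hsub2 : (⋃ k ∈ Set.Iic K, 𝒞 k) ⊆ {j : ℕ+ | ω j ≤ (2 * Υ * (K : ℕ)) ^ α} := by
    intro j hj
    obtain ⟨k, hkK, hk⟩ := Set.mem_iUnion₂.1 hj
    refine (key _ (by positivity) j).2 ?_
    have hc := (abs_le.1 (hcluster k j hk)).2
    have h2 : ((k : ℕ) : ℝ) ≤ ((K : ℕ) : ℝ) := by exact_mod_cast Set.mem_Iic.1 hkK
    have h3 := mul_le_mul_of_nonneg_left h2 hΥ.le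
    linarith
  have hf2 := hfin _ hl2
  have hf := hf2.subset hsub2
  refine ⟨hf, ?_, ?_⟩
  · rw [mul_assoc, ← hpw _ (by positivity)]
    exact (hweyl _ hl1).1.trans (by exact_mod_cast Set.ncard_le_ncard hsub1 hf)
  · rw [mul_assoc, ← hpw _ (by positivity)]
    exact le_trans (by exact_mod_cast Set.ncard_le_ncard hsub2 hf2) (hweyl _ hl2).2
end

section
/- For every real b > 1 there exists a constant C_b > 0 such that for all real numbers x and y, ∑_{ℓ=1}^{∞} ⟨ℓ − x⟩^{−b} ⟨ℓ − y⟩^{−b} ≤ C_b · ⟨x − y⟩^{−b}. -/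
/-!
The bracket satisfies `⟨x - y⟩ ≤ 2 max(⟨ℓ - x⟩, ⟨ℓ - y⟩)` (a weak triangle inequality), so the larger
of the two factors is at least `⟨x - y⟩ / 2` and each term of the sum is at most
`2^b ⟨x - y⟩^{-b} (⟨ℓ - x⟩^{-b} + ⟨ℓ - y⟩^{-b})` (`jb_mul_le`). It remains to bound
`∑ ⟨ℓ - x⟩^{-b}` uniformly in `x` (`jb_sum_bound`): replacing `x` by its integer part changes every
bracket by a factor of at most `2`, and after a translation the sum is part of
`∑_{n ∈ ℤ} ⟨n⟩^{-b}`, which converges because `b > 1`.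
-/

/-- The Japanese bracket `⟨a⟩ = (1 + a²)^{1/2}` of a real number. -/
noncomputable def jb (a : ℝ) : ℝ := Real.sqrt (1 + a ^ 2)

lemma jb_pos (a : ℝ) : 0 < jb a := Real.sqrt_pos.2 (by positivity)

lemma abs_le_jb (a : ℝ) : |a| ≤ jb a := Real.abs_le_sqrt (by linarith)

lemma one_le_jb (a : ℝ) : 1 ≤ jb a := Real.one_le_sqrt.2 (by nlinarith [sq_nonneg a])

/-- The bracket is `1`-Lipschitz. -/
lemma jb_add_le (a c : ℝ) : jb (a + c) ≤ jb a + |c| := by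
  have h0 := jb_pos a
  have hsq : jb a ^ 2 = 1 + a ^ 2 := Real.sq_sqrt (by positivity)
  have hac : a * c ≤ jb a * |c| :=
    (le_abs_self _).trans (abs_mul a c ▸ mul_le_mul_of_nonneg_right (abs_le_jb a) (abs_nonneg c))
  refine Real.sqrt_le_iff.2 ⟨by positivity, ?_⟩
  nlinarith [sq_abs c]

lemma rpow_neg_le_of_le_two_mul {b s t : ℝ} (hb : 0 ≤ b) (hs : 0 < s) (ht : 0 < t)
    (h : s ≤ 2 * t) : t ^ (-b) ≤ 2 ^ b * s ^ (-b) := by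
  have h1 : (2 * t) ^ (-b) ≤ s ^ (-b) := Real.rpow_le_rpow_of_nonpos hs h (by linarith)
  rw [Real.mul_rpow (by norm_num) ht.le] at h1
  calc t ^ (-b) = 2 ^ b * (2 ^ (-b) * t ^ (-b)) := by
        rw [← mul_assoc, ← Real.rpow_add (by norm_num)]; simp
    _ ≤ _ := by gcongr

/-- The term-by-term estimate: the larger of `⟨u⟩`, `⟨v⟩` is at least `⟨v - u⟩ / 2`, and the other
factor is kept. -/
lemma jb_mul_le {b : ℝ} (hb : 0 ≤ b) (u v : ℝ) :
    jb u ^ (-b) * jb v ^ (-b) ≤ 2 ^ b * jb (v - u) ^ (-b) * (jb u ^ (-b) + jb v ^ (-b)) := by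
  have hu : 0 < jb u ^ (-b) := Real.rpow_pos_of_pos (jb_pos u) _
  have hv : 0 < jb v ^ (-b) := Real.rpow_pos_of_pos (jb_pos v) _
  have hK : 0 < 2 ^ b * jb (v - u) ^ (-b) :=
    mul_pos (Real.rpow_pos_of_pos two_pos _) (Real.rpow_pos_of_pos (jb_pos _) _)
  have h1 : jb (v - u) ≤ jb v + jb u := by
    have h := jb_add_le v (-u)
    rw [abs_neg, ← sub_eq_add_neg] at h
    linarith [abs_le_jb u]
  rcases le_total (jb u) (jb v) with h | h
  · have h2 := rpow_neg_le_of_le_two_mul hb (jb_pos (v - u)) (jb_pos v) (by linarith)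
    nlinarith [mul_le_mul_of_nonneg_left h2 hu.le, mul_pos hK hv]
  · have h2 := rpow_neg_le_of_le_two_mul hb (jb_pos (v - u)) (jb_pos u) (by linarith)
    nlinarith [mul_le_mul_of_nonneg_right h2 hv.le, mul_pos hK hu]

lemma summable_jb_int {b : ℝ} (hb : 1 < b) : Summable fun n : ℤ => jb (n : ℝ) ^ (-b) := by
  refine Summable.of_norm_bounded_eventually (Real.summable_abs_int_rpow hb) ?_
  -- `n = 0` is excluded because `0 ^ (-b) = 0` by convention.
  filter_upwards [(Set.finite_singleton (0 : ℤ)).compl_mem_cofinite] with n hn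
  have hn' : (0 : ℝ) < |(n : ℝ)| := abs_pos.2 (Int.cast_ne_zero.2 hn)
  rw [Real.norm_of_nonneg (Real.rpow_nonneg (jb_pos _).le _)]
  exact Real.rpow_le_rpow_of_nonpos hn' (abs_le_jb _) (by linarith)

/-- The sums `∑ ⟨ℓ - x⟩^{-b}` are bounded uniformly in `x`, by comparing `⟨ℓ - x⟩` with
`⟨ℓ - ⌊x⌋⟩` and embedding the indices `ℓ - ⌊x⌋` into `ℤ`. -/
lemma jb_sum_bound {b : ℝ} (hb : 1 < b) (x : ℝ) :
    Summable (fun ℓ : ℕ+ => jb (((ℓ : ℕ) : ℝ) - x) ^ (-b)) ∧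
    ∑' ℓ : ℕ+, jb (((ℓ : ℕ) : ℝ) - x) ^ (-b) ≤ 2 ^ b * ∑' n : ℤ, jb (n : ℝ) ^ (-b) := by
  have hg := summable_jb_int hb
  let i : ℕ+ → ℤ := fun ℓ => ((ℓ : ℕ) : ℤ) - ⌊x⌋
  have hi : Function.Injective i := fun p q h => PNat.coe_injective (by simpa [i] using h)
  have hs : Summable fun ℓ : ℕ+ => 2 ^ b * jb (i ℓ : ℝ) ^ (-b) :=
    (hg.comp_injective hi).mul_left _
  have hle (ℓ : ℕ+) : jb (((ℓ : ℕ) : ℝ) - x) ^ (-b) ≤ 2 ^ b * jb (i ℓ : ℝ) ^ (-b) := by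
    refine rpow_neg_le_of_le_two_mul (by linarith) (jb_pos _) (jb_pos _) ?_
    have h := jb_add_le (((ℓ : ℕ) : ℝ) - x) (Int.fract x)
    have e : ((ℓ : ℕ) : ℝ) - x + Int.fract x = (i ℓ : ℝ) := by
      simp only [i, Int.fract]; push_cast; ring
    rw [e, abs_of_nonneg (Int.fract_nonneg x)] at h
    linarith [Int.fract_lt_one x, one_le_jb (((ℓ : ℕ) : ℝ) - x)]
  have hs' := hs.of_nonneg_of_le (fun ℓ => Real.rpow_nonneg (jb_pos _).le _) hle
  refine ⟨hs', (hs'.tsum_le_tsum hle hs).trans ?_⟩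
  rw [tsum_mul_left]
  gcongr
  exact tsum_comp_le_tsum_of_inj hg (fun n => Real.rpow_nonneg (jb_pos _).le _) hi

/-- **Discrete convolution estimate for Japanese brackets.**
For every real `b > 1` there is a constant `C_b > 0` such that for all reals `x, y`,
`∑_{ℓ ≥ 1} ⟨ℓ - x⟩^{-b} ⟨ℓ - y⟩^{-b} ≤ C_b ⟨x - y⟩^{-b}`. -/
theorem japanese_bracket_convolution (b : ℝ) (hb : 1 < b) :
    ∃ C > (0 : ℝ), ∀ x y : ℝ,
      ∑' ℓ : ℕ+, jb (((ℓ : ℕ) : ℝ) - x) ^ (-b) * jb (((ℓ : ℕ) : ℝ) - y) ^ (-b)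
        ≤ C * jb (x - y) ^ (-b) := by
  set S := ∑' n : ℤ, jb (n : ℝ) ^ (-b)
  have hSpos : 0 < S := (summable_jb_int hb).tsum_pos
    (fun n => Real.rpow_nonneg (jb_pos _).le _) 0 (Real.rpow_pos_of_pos (jb_pos _) _)
  refine ⟨2 ^ b * (2 ^ b * S + 2 ^ b * S), by positivity, fun x y => ?_⟩
  obtain ⟨hx, hx'⟩ := jb_sum_bound hb x
  obtain ⟨hy, hy'⟩ := jb_sum_bound hb y
  have hle (ℓ : ℕ+) : jb (((ℓ : ℕ) : ℝ) - x) ^ (-b) * jb (((ℓ : ℕ) : ℝ) - y) ^ (-b) ≤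
      2 ^ b * jb (x - y) ^ (-b) *
        (jb (((ℓ : ℕ) : ℝ) - x) ^ (-b) + jb (((ℓ : ℕ) : ℝ) - y) ^ (-b)) := by
    have h := jb_mul_le (b := b) (by linarith) (((ℓ : ℕ) : ℝ) - x) (((ℓ : ℕ) : ℝ) - y)
    rwa [sub_sub_sub_cancel_left] at h
  have hs := (hx.add hy).mul_left (2 ^ b * jb (x - y) ^ (-b))
  have hs' := hs.of_nonneg_of_le (fun ℓ => mul_nonneg (Real.rpow_nonneg (jb_pos _).le _)
    (Real.rpow_nonneg (jb_pos _).le _)) hle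
  have hJ : 0 ≤ jb (x - y) ^ (-b) := Real.rpow_nonneg (jb_pos _).le _
  calc _ ≤ _ := hs'.tsum_le_tsum hle hs
    _ = 2 ^ b * jb (x - y) ^ (-b) * (∑' ℓ : ℕ+, jb (((ℓ : ℕ) : ℝ) - x) ^ (-b) +
          ∑' ℓ : ℕ+, jb (((ℓ : ℕ) : ℝ) - y) ^ (-b)) := by
        rw [tsum_mul_left, hx.tsum_add hy]
    _ ≤ 2 ^ b * jb (x - y) ^ (-b) * (2 ^ b * S + 2 ^ b * S) := by gcongr
    _ = _ := by ring
end

section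
/- For a tuple 𝐡 = (𝐡₁,…,𝐡_p) of positive integers (p ≥ 1), define a_𝐡 := (∏_{i=1}^{p} 𝐡_i) / (max_{1≤i≤p} 𝐡_i)². Then for all tuples 𝐤 and 𝐤' of positive integers and every positive integer ℓ, a_{(𝐤,ℓ)} · a_{(𝐤',ℓ)} ≤ a_{(𝐤,𝐤')}, where (𝐤,ℓ) denotes the tuple obtained by appending ℓ to 𝐤 and (𝐤,𝐤') the concatenation of 𝐤 and 𝐤'. -/
/-!
The products in the numerators match up to a factor `ℓ²`, so after taking square roots the claim is
`ℓ * max (𝐤, 𝐤') ≤ max (𝐤, ℓ) * max (𝐤', ℓ)`. The maximum of `(𝐤, 𝐤')` is an entry of `𝐤` or of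
`𝐤'`; it is bounded by the factor containing that tuple, and `ℓ` is bounded by the other factor.
-/

/-- `a_𝐡 = (∏_i 𝐡_i) / (max_i 𝐡_i)²` for a tuple `𝐡` of positive integers. -/
noncomputable def aWeight {p : ℕ} (h : Fin p → ℕ+) : ℝ :=
  (∏ i, ((h i : ℕ) : ℝ)) / ((Finset.univ.sup fun i => (h i : ℕ) : ℕ) : ℝ) ^ 2

/-- The maximum in the denominator of `aWeight`. -/
def tupleMax {p : ℕ} (h : Fin p → ℕ+) : ℕ := Finset.univ.sup fun i => (h i : ℕ)

lemma le_tupleMax {p : ℕ} (h : Fin p → ℕ+) (i : Fin p) : (h i : ℕ) ≤ tupleMax h :=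
  Finset.le_sup (f := fun i => (h i : ℕ)) (Finset.mem_univ i)

lemma le_tupleMax_snoc {p : ℕ} (k : Fin p → ℕ+) (ℓ : ℕ+) (i : Fin p) :
    (k i : ℕ) ≤ tupleMax (Fin.snoc k ℓ : Fin (p + 1) → ℕ+) := by
  simpa using le_tupleMax (Fin.snoc k ℓ : Fin (p + 1) → ℕ+) i.castSucc

lemma last_le_tupleMax_snoc {p : ℕ} (k : Fin p → ℕ+) (ℓ : ℕ+) :
    (ℓ : ℕ) ≤ tupleMax (Fin.snoc k ℓ : Fin (p + 1) → ℕ+) := by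
  simpa using le_tupleMax (Fin.snoc k ℓ : Fin (p + 1) → ℕ+) (Fin.last p)

lemma mul_tupleMax_append_le {p p' : ℕ} (hp : 1 ≤ p)
    (k : Fin p → ℕ+) (k' : Fin p' → ℕ+) (ℓ : ℕ+) :
    (ℓ : ℕ) * tupleMax (Fin.append k k') ≤
      tupleMax (Fin.snoc k ℓ : Fin (p + 1) → ℕ+) *
        tupleMax (Fin.snoc k' ℓ : Fin (p' + 1) → ℕ+) := by
  have hne : (Finset.univ : Finset (Fin (p + p'))).Nonempty := ⟨⟨0, by omega⟩, Finset.mem_univ _⟩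
  obtain ⟨i, -, hi⟩ :=
    Finset.exists_mem_eq_sup _ hne (fun i => ((Fin.append k k' i : ℕ+) : ℕ))
  rw [show tupleMax (Fin.append k k') = ((Fin.append k k' i : ℕ+) : ℕ) from hi]
  induction i using Fin.addCases with
  | left i =>
    rw [Fin.append_left, mul_comm]
    exact Nat.mul_le_mul (le_tupleMax_snoc k ℓ i) (last_le_tupleMax_snoc k' ℓ)
  | right i =>
    rw [Fin.append_right]
    exact Nat.mul_le_mul (last_le_tupleMax_snoc k ℓ) (le_tupleMax_snoc k' ℓ i)

/-- **Contraction inequality for the weights `a`.**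
For all nonempty tuples `𝐤, 𝐤'` of positive integers and every positive integer `ℓ`,
`a_{(𝐤,ℓ)} · a_{(𝐤',ℓ)} ≤ a_{(𝐤,𝐤')}`. -/
theorem aWeight_contraction (p p' : ℕ) (hp : 1 ≤ p) (hp' : 1 ≤ p')
    (k : Fin p → ℕ+) (k' : Fin p' → ℕ+) (ℓ : ℕ+) :
    aWeight (Fin.snoc k ℓ) * aWeight (Fin.snoc k' ℓ) ≤ aWeight (Fin.append k k') := by
  have key := mul_tupleMax_append_le hp k k' ℓ
  have hA := ℓ.pos.trans_le (last_le_tupleMax_snoc k ℓ)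
  have hB := ℓ.pos.trans_le (last_le_tupleMax_snoc k' ℓ)
  have hS : 0 < tupleMax (Fin.append k k') :=
    (PNat.pos _).trans_le (le_tupleMax (Fin.append k k') ⟨0, by omega⟩)
  unfold aWeight
  simp only [← tupleMax.eq_1]
  generalize tupleMax (Fin.snoc k ℓ : Fin (p + 1) → ℕ+) = A at *
  generalize tupleMax (Fin.snoc k' ℓ : Fin (p' + 1) → ℕ+) = B at *
  generalize tupleMax (Fin.append k k') = S at *
  simp only [Fin.prod_univ_castSucc, Fin.snoc_castSucc, Fin.snoc_last, Fin.prod_univ_add,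
    Fin.append_left, Fin.append_right]
  have hP : (0 : ℝ) ≤ ∏ i, ((k i : ℕ) : ℝ) := by positivity
  have hQ : (0 : ℝ) ≤ ∏ i, ((k' i : ℕ) : ℝ) := by positivity
  generalize (∏ i, ((k i : ℕ) : ℝ)) = P at *
  generalize (∏ i, ((k' i : ℕ) : ℝ)) = Q at *
  have hkey : ((ℓ : ℕ) : ℝ) * S ≤ A * B := by exact_mod_cast key
  rw [div_mul_div_comm, div_le_div_iff₀ (by positivity) (by positivity)]
  calc P * ((ℓ : ℕ) : ℝ) * (Q * ((ℓ : ℕ) : ℝ)) * (S : ℝ) ^ 2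
      = P * Q * (((ℓ : ℕ) : ℝ) * S) ^ 2 := by ring
    _ ≤ P * Q * ((A : ℝ) * B) ^ 2 := by gcongr
    _ = P * Q * ((A : ℝ) ^ 2 * (B : ℝ) ^ 2) := by ring
end

section
/- For a tuple 𝐡 = (𝐡₁,…,𝐡_p) of positive integers with p ≥ 2, define b_𝐡 := 𝐡₂^⋆ / 𝐡₁^⋆, where 𝐡₁^⋆ ≥ 𝐡₂^⋆ ≥ … ≥ 𝐡_p^⋆ is the non-increasing rearrangement of 𝐡. Then for all tuples 𝐤, 𝐤' of positive integers of lengths at least 2 and every positive integer ℓ, b_{(𝐤,ℓ)} · b_{(𝐤',ℓ)} ≤ b_{(𝐤,𝐤')}, where (𝐤,ℓ) denotes the tuple obtained by appending ℓ to 𝐤 and (𝐤,𝐤') the concatenation of 𝐤 and 𝐤'. -/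
/-!
Write `a₁ ≥ a₂` and `b₁ ≥ b₂` for the two largest entries of `k` and `k'`. The largest entry of
`(k, ℓ)` is at least `max a₁ ℓ` and its second largest is at most `max a₂ (min a₁ ℓ)`, and similarly
for `(k', ℓ)`; the largest entry of `(k, k')` is at most `max a₁ b₁`, and its second largest is at
least each of `a₂`, `b₂`, `min a₁ b₁` (`starTuple_snoc`, `starTuple_append`).
The claim thus becomes an inequality between five numbers. It is symmetric in `k` and `k'`, so one
may assume `b₁ ≤ a₁`, and it follows by locating `ℓ` relative to `b₁ ≤ a₁`
(`contraction_aux`).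
-/

/-- `starTuple h j` is `𝐡_j^⋆`, the `j`-th entry (indexed from `1`) of the non-increasing
rearrangement `𝐡₁^⋆ ≥ 𝐡₂^⋆ ≥ … ≥ 𝐡_p^⋆` of the tuple `h` (junk value `1` if `j` is out of
range). -/
noncomputable def starTuple {p : ℕ} (h : Fin p → ℕ+) (j : ℕ) : ℕ+ :=
  if hj : 1 ≤ j ∧ j ≤ p then h (Tuple.sort h (Fin.rev ⟨j - 1, by omega⟩)) else 1

/-- `b_𝐡 = 𝐡₂^⋆ / 𝐡₁^⋆` for a tuple `𝐡` of positive integers of length at least 2. -/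
noncomputable def bWeight {p : ℕ} (h : Fin p → ℕ+) : ℝ :=
  ((starTuple h 2 : ℕ) : ℝ) / ((starTuple h 1 : ℕ) : ℝ)

/-- The first two entries of the non-increasing rearrangement are attained at distinct positions,
and the second one dominates every entry away from the position of the first. -/
lemma exists_starTuple {p : ℕ} (hp : 2 ≤ p) (h : Fin p → ℕ+) :
    ∃ i j, i ≠ j ∧ h i = starTuple h 1 ∧ h j = starTuple h 2 ∧
      starTuple h 2 ≤ starTuple h 1 ∧ ∀ m, m ≠ i → h m ≤ starTuple h 2 := by
  have hmono := Tuple.monotone_sort h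
  have e1 : starTuple h 1 = h (Tuple.sort h (Fin.rev ⟨0, by omega⟩)) := by
    unfold starTuple
    rw [dif_pos ⟨le_rfl, by omega⟩]
  have e2 : starTuple h 2 = h (Tuple.sort h (Fin.rev ⟨1, by omega⟩)) := by
    unfold starTuple
    rw [dif_pos ⟨by omega, by omega⟩]
  refine ⟨_, _, ?_, e1.symm, e2.symm, ?_, ?_⟩
  · intro hc
    have := Fin.rev_injective ((Tuple.sort h).injective hc)
    simp at this
  · rw [e1, e2]
    exact hmono (Fin.rev_le_rev.2 (by simp))
  · intro m hm
    obtain ⟨n, rfl⟩ := (Tuple.sort h).surjective m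
    rw [e2]
    refine hmono ?_
    have hn : n ≠ Fin.rev ⟨0, by omega⟩ := fun hc => hm (by rw [hc])
    rw [Ne, Fin.ext_iff, Fin.val_rev] at hn
    rw [Fin.le_def, Fin.val_rev]
    have := n.isLt
    simp only at hn ⊢
    omega

lemma le_starTuple_one {p : ℕ} (hp : 2 ≤ p) (h : Fin p → ℕ+) (m : Fin p) :
    h m ≤ starTuple h 1 := by
  obtain ⟨i, j, -, hi, -, h21, hm⟩ := exists_starTuple hp h
  by_cases hc : m = i
  · rw [hc, hi]
  · exact (hm m hc).trans h21

lemma starTuple_two_le {p : ℕ} (hp : 2 ≤ p) (h : Fin p → ℕ+) (c : ℕ+) (n : Fin p)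
    (hn : ∀ m, m ≠ n → h m ≤ c) : starTuple h 2 ≤ c := by
  obtain ⟨i, j, hij, hi, hj, h21, -⟩ := exists_starTuple hp h
  by_cases hc : j = n
  · exact h21.trans (hi ▸ hn i (hc ▸ hij))
  · exact hj ▸ hn j hc

lemma le_starTuple_two {p : ℕ} (hp : 2 ≤ p) (h : Fin p → ℕ+) (c : ℕ+) (m n : Fin p)
    (hmn : m ≠ n) (hm : c ≤ h m) (hn : c ≤ h n) : c ≤ starTuple h 2 := by
  obtain ⟨i, j, -, -, -, -, hmax⟩ := exists_starTuple hp h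
  by_cases hc : m = i
  · exact hn.trans (hmax n (hc ▸ hmn.symm))
  · exact hm.trans (hmax m hc)

lemma starTuple_snoc {p : ℕ} (hp : 2 ≤ p) (k : Fin p → ℕ+) (ℓ : ℕ+) :
    max (starTuple k 1) ℓ ≤ starTuple (Fin.snoc k ℓ : Fin (p + 1) → ℕ+) 1 ∧
    starTuple (Fin.snoc k ℓ : Fin (p + 1) → ℕ+) 2 ≤
      max (starTuple k 2) (min (starTuple k 1) ℓ) := by
  obtain ⟨i, j, -, hi, -, -, hmax⟩ := exists_starTuple hp k
  have hp1 : 2 ≤ p + 1 := by omega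
  refine ⟨max_le ?_ ?_, ?_⟩
  · simpa [hi] using le_starTuple_one hp1 (Fin.snoc k ℓ : Fin (p + 1) → ℕ+) i.castSucc
  · simpa using le_starTuple_one hp1 (Fin.snoc k ℓ : Fin (p + 1) → ℕ+) (Fin.last p)
  · rcases le_total ℓ (starTuple k 1) with hl | hl
    · refine starTuple_two_le hp1 _ _ i.castSucc fun m => ?_
      induction m using Fin.lastCases with
      | last => intro _; simp [hl]
      | cast m =>
        intro hm
        rw [Fin.snoc_castSucc]
        exact (hmax m fun hc => hm (by rw [hc])).trans (le_max_left _ _)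
    · refine starTuple_two_le hp1 _ _ (Fin.last p) fun m => ?_
      induction m using Fin.lastCases with
      | last => intro hm; exact absurd rfl hm
      | cast m =>
        intro _
        rw [Fin.snoc_castSucc, min_eq_left hl]
        exact (le_starTuple_one hp k m).trans (le_max_right _ _)

lemma starTuple_append {p p' : ℕ} (hp : 2 ≤ p) (hp' : 2 ≤ p') (k : Fin p → ℕ+)
    (k' : Fin p' → ℕ+) :
    starTuple (Fin.append k k') 1 ≤ max (starTuple k 1) (starTuple k' 1) ∧
    starTuple k 2 ≤ starTuple (Fin.append k k') 2 ∧
    starTuple k' 2 ≤ starTuple (Fin.append k k') 2 ∧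
    min (starTuple k 1) (starTuple k' 1) ≤ starTuple (Fin.append k k') 2 := by
  have hpp : 2 ≤ p + p' := by omega
  obtain ⟨i, j, hij, hi, hj, h21, -⟩ := exists_starTuple hp k
  obtain ⟨i', j', hij', hi', hj', h21', -⟩ := exists_starTuple hp' k'
  refine ⟨?_, ?_, ?_, ?_⟩
  · obtain ⟨n, -, -, hn, -⟩ := exists_starTuple hpp (Fin.append k k')
    rw [← hn]
    induction n using Fin.addCases with
    | left m =>
      rw [Fin.append_left]
      exact (le_starTuple_one hp k m).trans (le_max_left _ _)
    | right m =>
      rw [Fin.append_right]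
      exact (le_starTuple_one hp' k' m).trans (le_max_right _ _)
  · refine le_starTuple_two hpp _ _ (Fin.castAdd p' i) (Fin.castAdd p' j) ?_ ?_ ?_
    · simpa using hij
    · rwa [Fin.append_left, hi]
    · rw [Fin.append_left, hj]
  · refine le_starTuple_two hpp _ _ (Fin.natAdd p i') (Fin.natAdd p j') ?_ ?_ ?_
    · simpa using hij'
    · rwa [Fin.append_right, hi']
    · rw [Fin.append_right, hj']
  · refine le_starTuple_two hpp _ _ (Fin.castAdd p' i) (Fin.natAdd p i') ?_ ?_ ?_
    · rw [Ne, Fin.ext_iff, Fin.val_castAdd, Fin.val_natAdd]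
      omega
    · rw [Fin.append_left, hi]
      exact min_le_left _ _
    · rw [Fin.append_right, hi']
      exact min_le_right _ _

/-- The contraction inequality with denominators cleared, in terms of the two largest entries
`a₁ ≥ a₂` and `b₁ ≥ b₂`, when `b₁ ≤ a₁`; here `Y` bounds the second largest entry of the
concatenation from below. -/
lemma contraction_aux {a₁ a₂ b₁ b₂ l Y : ℕ+} (ha : a₂ ≤ a₁) (hb : b₂ ≤ b₁) (hab : b₁ ≤ a₁)
    (h2 : a₂ ≤ Y) (h3 : b₁ ≤ Y) :
    max a₂ (min a₁ l) * max b₂ (min b₁ l) * a₁ ≤ Y * (max a₁ l * max b₁ l) := by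
  have hV : max b₂ (min b₁ l) ≤ b₁ := max_le hb (min_le_left _ _)
  rcases le_total l a₁ with hl | hl
  · rw [max_eq_left hl, min_eq_right hl]
    have key : max a₂ l * max b₂ (min b₁ l) ≤ Y * max b₁ l := by
      rcases le_total l b₁ with hlb | hlb
      · exact mul_le_mul' (max_le h2 (hlb.trans h3)) (hV.trans (le_max_left _ _))
      · rw [max_eq_right hlb]
        rcases le_total a₂ l with h | h
        · rw [max_eq_right h, mul_comm]
          exact mul_le_mul' (hV.trans h3) le_rfl
        · rw [max_eq_left h]
          exact mul_le_mul' h2 (hV.trans hlb)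
    calc _ ≤ Y * max b₁ l * a₁ := mul_le_mul' key le_rfl
      _ = _ := by rw [mul_assoc, mul_comm a₁]
  · rw [max_eq_right hl, max_eq_right (hab.trans hl), min_eq_left hl, max_eq_right ha]
    calc _ ≤ a₁ * Y * a₁ := mul_le_mul' (mul_le_mul' le_rfl (hV.trans h3)) le_rfl
      _ = Y * (a₁ * a₁) := by rw [mul_comm a₁ Y, mul_assoc]
      _ ≤ _ := mul_le_mul' le_rfl (mul_le_mul' hl hl)

/-- **Contraction inequality for the weights `b`.**
For all tuples `𝐤, 𝐤'` of positive integers of lengths at least 2 and every positive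
integer `ℓ`, `b_{(𝐤,ℓ)} · b_{(𝐤',ℓ)} ≤ b_{(𝐤,𝐤')}`. -/
theorem bWeight_contraction (p p' : ℕ) (hp : 2 ≤ p) (hp' : 2 ≤ p')
    (k : Fin p → ℕ+) (k' : Fin p' → ℕ+) (ℓ : ℕ+) :
    bWeight (Fin.snoc k ℓ) * bWeight (Fin.snoc k' ℓ) ≤ bWeight (Fin.append k k') := by
  obtain ⟨hS1, hS2⟩ := starTuple_snoc hp k ℓ
  obtain ⟨hT1, hT2⟩ := starTuple_snoc hp' k' ℓ
  obtain ⟨hA1, hk, hk', hmin⟩ := starTuple_append hp hp' k k'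
  obtain ⟨-, -, -, -, -, ha, -⟩ := exists_starTuple hp k
  obtain ⟨-, -, -, -, -, hb, -⟩ := exists_starTuple hp' k'
  unfold bWeight
  generalize starTuple (Fin.snoc k ℓ : Fin (p + 1) → ℕ+) 1 = S₁ at *
  generalize starTuple (Fin.snoc k ℓ : Fin (p + 1) → ℕ+) 2 = S₂ at *
  generalize starTuple (Fin.snoc k' ℓ : Fin (p' + 1) → ℕ+) 1 = T₁ at *
  generalize starTuple (Fin.snoc k' ℓ : Fin (p' + 1) → ℕ+) 2 = T₂ at *
  generalize starTuple (Fin.append k k') 1 = A₁ at *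
  generalize starTuple (Fin.append k k') 2 = A₂ at *
  have key : S₂ * T₂ * A₁ ≤ A₂ * (S₁ * T₁) := by
    refine (mul_le_mul' (mul_le_mul' hS2 hT2) hA1).trans
      (le_trans ?_ (mul_le_mul' le_rfl (mul_le_mul' hS1 hT1)))
    rcases le_total (starTuple k' 1) (starTuple k 1) with h | h
    · rw [min_eq_right h] at hmin
      rw [max_eq_left h]
      exact contraction_aux ha hb h hk hmin
    · rw [min_eq_left h] at hmin
      rw [max_eq_right h, mul_comm (max (starTuple k 2) _), mul_comm (max (starTuple k 1) _)]
      exact contraction_aux hb ha h hk' hmin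
  have hpos : ∀ n : ℕ+, (0 : ℝ) < ((n : ℕ) : ℝ) := fun n => Nat.cast_pos.2 n.pos
  rw [div_mul_div_comm, div_le_div_iff₀ (mul_pos (hpos _) (hpos _)) (hpos _)]
  have key' : ((S₂ * T₂ * A₁ : ℕ+) : ℕ) ≤ ((A₂ * (S₁ * T₁) : ℕ+) : ℕ) := key
  simp only [PNat.mul_coe] at key'
  exact_mod_cast key'
end

section
/- For every integer q ≥ 1 there exist constants 0 < c_q ≤ C_q such that for every tuple 𝐤 = (𝐤₁,…,𝐤_q) of positive integers, c_q · (1 + min_{ς∈{−1,1}^q} |ς₁𝐤₁ + ⋯ + ς_q𝐤_q|³)^{−1} ≤ Γ_𝐤 ≤ C_q · (1 + min_{ς∈{−1,1}^q} |ς₁𝐤₁ + ⋯ + ς_q𝐤_q|³)^{−1}. -/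
/-- `Γ_𝐦 = ∑_{ς ∈ {-1,1}^r} ⟨ς₁𝐦₁ + ⋯ + ς_r𝐦_r⟩^{-3}` for a tuple `𝐦` of positive
integers; signs are encoded by booleans. -/
noncomputable def Gam {r : ℕ} (m : Fin r → ℕ+) : ℝ :=
  ∑ ς : Fin r → Bool,
    (jb (∑ i, (if ς i then (1 : ℝ) else -1) * ((m i : ℕ) : ℝ)) ^ 3)⁻¹

theorem jb_cube_le (a : ℝ) : jb a ^ 3 ≤ 4 * (1 + |a| ^ 3) := by
  have ha := abs_nonneg a
  have h : jb a ≤ 1 + |a| := by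
    unfold jb
    rw [Real.sqrt_le_left (by positivity)]
    nlinarith [sq_abs a]
  calc jb a ^ 3 ≤ (1 + |a|) ^ 3 := pow_le_pow_left₀ (Real.sqrt_nonneg _) h 3
    _ ≤ 4 * (1 + |a| ^ 3) := by
      -- The difference of the two sides is `3 (1 + |a|) (|a| - 1)²`.
      nlinarith [mul_nonneg (by positivity : 0 ≤ 1 + |a|) (sq_nonneg (|a| - 1))]

theorem le_jb_cube (a : ℝ) : 1 + |a| ^ 3 ≤ 2 * jb a ^ 3 := by
  have h1 : 1 ≤ jb a := by
    unfold jb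
    rw [Real.one_le_sqrt]
    nlinarith [sq_nonneg a]
  have h2 : |a| ≤ jb a := Real.abs_le_sqrt (by linarith)
  linarith [one_le_pow₀ h1 (n := 3), pow_le_pow_left₀ (abs_nonneg a) h2 3]

/-- **Two-sided estimate on `Γ` via the minimal sign combination.**
For every `q ≥ 1` there are constants `0 < c_q ≤ C_q` such that for every tuple
`𝐤 ∈ (ℕ≥1)^q`,
`c_q (1 + min_{ς} |ς₁𝐤₁ + ⋯ + ς_q𝐤_q|³)⁻¹ ≤ Γ_𝐤 ≤ C_q (1 + min_{ς} |ς₁𝐤₁ + ⋯ + ς_q𝐤_q|³)⁻¹`. -/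
theorem gamma_equiv_min (q : ℕ) (hq : 1 ≤ q) :
    ∃ c C : ℝ, 0 < c ∧ c ≤ C ∧
      ∀ k : Fin q → ℕ+,
        c * (1 + ⨅ ς : Fin q → Bool,
              |∑ i, (if ς i then (1 : ℝ) else -1) * ((k i : ℕ) : ℝ)| ^ 3)⁻¹
            ≤ Gam k ∧
        Gam k ≤
          C * (1 + ⨅ ς : Fin q → Bool,
              |∑ i, (if ς i then (1 : ℝ) else -1) * ((k i : ℕ) : ℝ)| ^ 3)⁻¹ := by
  refine ⟨1 / 4, 2 * 2 ^ q, by norm_num, ?_, fun k => ?_⟩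
  · have : (1 : ℝ) ≤ 2 ^ q := one_le_pow₀ (by norm_num)
    linarith
  unfold Gam
  set S : (Fin q → Bool) → ℝ :=
    fun ς => ∑ i, (if ς i then (1 : ℝ) else -1) * ((k i : ℕ) : ℝ) with hS
  change 1 / 4 * (1 + ⨅ ς, |S ς| ^ 3)⁻¹ ≤ ∑ ς, (jb (S ς) ^ 3)⁻¹ ∧
    ∑ ς, (jb (S ς) ^ 3)⁻¹ ≤ 2 * 2 ^ q * (1 + ⨅ ς, |S ς| ^ 3)⁻¹
  have hjb : ∀ a, 0 < jb a := fun a => Real.sqrt_pos.mpr (by positivity)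
  have hM : 0 ≤ ⨅ ς, |S ς| ^ 3 := Real.iInf_nonneg fun ς => by positivity
  constructor
  · obtain ⟨σ, hσ⟩ := exists_eq_ciInf_of_finite (f := fun ς => |S ς| ^ 3)
    rw [← hσ]
    calc 1 / 4 * (1 + |S σ| ^ 3)⁻¹ = (4 * (1 + |S σ| ^ 3))⁻¹ := by
          rw [mul_inv]; norm_num
      _ ≤ (jb (S σ) ^ 3)⁻¹ := inv_anti₀ (pow_pos (hjb _) 3) (jb_cube_le _)
      _ ≤ ∑ ς, (jb (S ς) ^ 3)⁻¹ :=
          Finset.single_le_sum (f := fun ς => (jb (S ς) ^ 3)⁻¹)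
            (fun ς _ => (inv_pos.mpr (pow_pos (hjb _) 3)).le) (Finset.mem_univ σ)
  · have hterm : ∀ ς, (jb (S ς) ^ 3)⁻¹ ≤ 2 * (1 + ⨅ ς, |S ς| ^ 3)⁻¹ := fun ς => by
      have hinf : ⨅ ς, |S ς| ^ 3 ≤ |S ς| ^ 3 := ciInf_le (Set.finite_range _).bddBelow ς
      rw [← div_eq_mul_inv, inv_le_comm₀ (pow_pos (hjb _) 3) (by positivity), inv_div]
      linarith [le_jb_cube (S ς)]
    calc ∑ ς, (jb (S ς) ^ 3)⁻¹ ≤ ∑ _ς : Fin q → Bool, 2 * (1 + ⨅ ς, |S ς| ^ 3)⁻¹ :=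
          Finset.sum_le_sum fun ς _ => hterm ς
      _ = 2 * 2 ^ q * (1 + ⨅ ς, |S ς| ^ 3)⁻¹ := by
          simp only [Finset.sum_const, Finset.card_univ, Fintype.card_fun, Fintype.card_bool,
            Fintype.card_fin, nsmul_eq_mul, Nat.cast_pow, Nat.cast_ofNat]
          ring
end

section
/- Let q ≥ 3 be an integer and let α > 0, Υ > 0, and C₀ ≥ 0 be real numbers. Then there exists a constant C > 0, depending only on q, α, Υ, and C₀, with the following property: for all positive integers k₁ ≥ k₂ ≥ … ≥ k_q, all sign tuples σ ∈ {−1,1}^q, and all positive real numbers ω₁,…,ω_q satisfying |ω_ℓ^{1/α} − Υ·k_ℓ| ≤ C₀ for every ℓ ∈ {1,…,q}, if |σ₁·k₁^α + σ₂·k₂^α| ≥ C·max(k₃^α, k₁^{α−1}), then |σ₁ω₁ + σ₂ω₂ + ⋯ + σ_qω_q| ≥ 1. -/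
/-!
Put `x = ω^{1/α}` and `y = Υ k`, so that `|x - y| ≤ C₀`. Two elementary estimates follow. The crude
one is `ω = x^α ≤ (Υ + C₀)^α k^α`. The fine one is `|ω - Υ^α k^α| ≤ K max(1, k^{α-1})`: for
`α ≤ 1` the power map is subadditive, hence `α`-Hölder, which gives the bound `C₀^α`; for `α ≥ 1`
Bernoulli's inequality gives the bound `α (Υ + C₀)^{α-1} k^{α-1} C₀`.

Let `M = max(k₃^α, k₁^{α-1}) ≥ 1`. In `∑ σ_ℓ ω_ℓ`, replacing the first two frequencies by
`Υ^α k_ℓ^α` and all the others by `0` costs `O(M)` per term: by the fine estimate for the first two,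
since `max(1, k_ℓ^{α-1}) ≤ M` (for `α < 1` the left side is `1`, for `α ≥ 1` it is at most
`k₁^{α-1}`), and by the crude estimate for the others. The dominant pair contributes
at least `Υ^α C M`, so a large `C` wins.
-/

/-- One-sided form of the modulus of continuity of the power map, which is Hölder for exponents at
most `1` and locally Lipschitz for exponents at least `1`; the two bounds are added up so as to
cover all `α > 0` at once. -/
lemma rpow_sub_rpow_le {α c x y z : ℝ} (hα : 0 < α) (hc : 0 ≤ c) (hy : 0 < y) (hx : 0 < x)
    (hxz : x ≤ z) (hxy : x - y ≤ c) :
    x ^ α - y ^ α ≤ c ^ α + α * c * max 1 (z ^ (α - 1)) := by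
  have hcα : 0 ≤ c ^ α := Real.rpow_nonneg hc α
  have hm : 0 ≤ α * c * max 1 (z ^ (α - 1)) := by positivity
  rcases le_total α 1 with h1 | h1
  · have h2 : x ^ α ≤ (y + c) ^ α := Real.rpow_le_rpow hx.le (by linarith) hα.le
    have h3 : (y + c) ^ α ≤ y ^ α + c ^ α := Real.rpow_add_le_add_rpow hy.le hc hα.le h1
    linarith
  · have h2 : 1 + α * (y / x - 1) ≤ (1 + (y / x - 1)) ^ α :=
      one_add_mul_self_le_rpow_one_add (by have : 0 < y / x := by positivity
                                           linarith) h1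
    have h3 : (1 + (y / x - 1)) ^ α = y ^ α / x ^ α := by
      rw [add_sub_cancel, Real.div_rpow hy.le hx.le]
    have hxα : 0 < x ^ α := Real.rpow_pos_of_pos hx α
    rw [h3, le_div_iff₀ hxα] at h2
    have h4 : x ^ α = x ^ (α - 1) * x := by
      rw [← Real.rpow_add_one hx.ne', sub_add_cancel]
    have h5 : (1 + α * (y / x - 1)) * x ^ α = x ^ α - α * (x - y) * x ^ (α - 1) := by
      rw [h4]; field_simp; ring
    have h6 : α * (x - y) * x ^ (α - 1) ≤ α * c * max 1 (z ^ (α - 1)) := by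
      have h7 : x ^ (α - 1) ≤ max 1 (z ^ (α - 1)) :=
        (Real.rpow_le_rpow hx.le hxz (by linarith)).trans (le_max_right _ _)
      have h8 : 0 ≤ x ^ (α - 1) := Real.rpow_nonneg hx.le _
      calc α * (x - y) * x ^ (α - 1) ≤ α * c * x ^ (α - 1) := by gcongr
        _ ≤ _ := by gcongr
    linarith

lemma frequency_le {α Υ C₀ k w : ℝ} (hα : 0 < α) (hΥ : 0 < Υ) (hC₀ : 0 ≤ C₀)
    (hk : 1 ≤ k) (hw : 0 < w) (h : |w ^ (1 / α) - Υ * k| ≤ C₀) :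
    w ≤ (Υ + C₀) ^ α * k ^ α := by
  have hx : w ^ (1 / α) ≤ (Υ + C₀) * k := by
    nlinarith [(abs_le.mp h).2]
  have h1 : (w ^ (1 / α)) ^ α = w := by
    rw [← Real.rpow_mul hw.le, one_div_mul_cancel hα.ne', Real.rpow_one]
  rw [← Real.mul_rpow (by positivity) (by linarith), ← h1]
  exact Real.rpow_le_rpow (by positivity) hx hα.le

lemma abs_frequency_sub_le {α Υ C₀ k w : ℝ} (hα : 0 < α) (hΥ : 0 < Υ) (hC₀ : 0 ≤ C₀)
    (hk : 1 ≤ k) (hw : 0 < w) (h : |w ^ (1 / α) - Υ * k| ≤ C₀) :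
    |w - Υ ^ α * k ^ α| ≤ C₀ ^ α + α * C₀ * max 1 (((Υ + C₀) * k) ^ (α - 1)) := by
  have hk0 : 0 < k := by linarith
  obtain ⟨hl, hr⟩ := abs_le.mp h
  have h1 : (w ^ (1 / α)) ^ α = w := by
    rw [← Real.rpow_mul hw.le, one_div_mul_cancel hα.ne', Real.rpow_one]
  have hx : 0 < w ^ (1 / α) := by positivity
  have hy : 0 < Υ * k := by positivity
  rw [← Real.mul_rpow hΥ.le hk0.le]
  have h2 := rpow_sub_rpow_le (z := (Υ + C₀) * k) hα hC₀ hy hx (by nlinarith) hr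
  have h3 := rpow_sub_rpow_le (z := (Υ + C₀) * k) hα hC₀ hx hy (by nlinarith) (by linarith)
  rw [h1] at h2 h3
  exact abs_le.mpr ⟨by linarith, h2⟩

/-- A common upper bound `M` of `1` and `m^{α-1}` also dominates the error `max 1 ((s k)^{α-1})`
for `1 ≤ k ≤ m`, up to a constant. The bound `1 ≤ M` is what handles `α < 1`, where `k^{α-1}` may
be much larger than `m^{α-1}`. -/
lemma max_one_rpow_le {α s k m M : ℝ} (hs : 0 < s) (hk : 1 ≤ k) (hkm : k ≤ m)
    (hM : 1 ≤ M) (hmM : m ^ (α - 1) ≤ M) :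
    max 1 ((s * k) ^ (α - 1)) ≤ (1 + s ^ (α - 1)) * M := by
  have hk0 : 0 < k := by linarith
  have hsp : 0 < s ^ (α - 1) := Real.rpow_pos_of_pos hs _
  have hkM : k ^ (α - 1) ≤ M := by
    rcases le_total α 1 with h1 | h1
    · exact (Real.rpow_le_one_of_one_le_of_nonpos hk (by linarith)).trans hM
    · exact (Real.rpow_le_rpow hk0.le hkm (by linarith)).trans hmM
  apply max_le
  · nlinarith
  · rw [Real.mul_rpow hs.le hk0.le]
    nlinarith


/-- **Non-resonance of couples whose two largest indices dominate.**
Let `q ≥ 3` and `α, Υ > 0`, `C₀ ≥ 0`.  There is a constant `C > 0`, depending only on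
`q, α, Υ, C₀`, such that for all positive integers `k₁ ≥ … ≥ k_q`, all signs
`σ ∈ {-1,1}^q` and all positive reals `ω₁,…,ω_q` with `|ω_ℓ^{1/α} - Υ k_ℓ| ≤ C₀`, if
`|σ₁ k₁^α + σ₂ k₂^α| ≥ C max(k₃^α, k₁^{α-1})` then `|σ₁ω₁ + ⋯ + σ_qω_q| ≥ 1`. -/
theorem small_divisor_lower_bound_of_dominant_pair
    (q : ℕ) (hq : 3 ≤ q) (α Υ C₀ : ℝ) (hα : 0 < α) (hΥ : 0 < Υ) (hC₀ : 0 ≤ C₀) :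
    ∃ C > (0 : ℝ),
      ∀ (k : Fin q → ℕ+), Antitone k →
        ∀ (σ : Fin q → ℝ), (∀ i, σ i = 1 ∨ σ i = -1) →
          ∀ (ω : Fin q → ℝ), (∀ i, 0 < ω i) →
            (∀ i, |ω i ^ (1 / α) - Υ * ((k i : ℕ) : ℝ)| ≤ C₀) →
            C * max (((k ⟨2, by omega⟩ : ℕ) : ℝ) ^ α)
                (((k ⟨0, by omega⟩ : ℕ) : ℝ) ^ (α - 1))
              ≤ |σ ⟨0, by omega⟩ * ((k ⟨0, by omega⟩ : ℕ) : ℝ) ^ α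
                  + σ ⟨1, by omega⟩ * ((k ⟨1, by omega⟩ : ℕ) : ℝ) ^ α| →
            1 ≤ |∑ i, σ i * ω i| := by
  set K : ℝ := C₀ ^ α + α * C₀ * (1 + (Υ + C₀) ^ (α - 1)) with hK
  set B : ℝ := (Υ + C₀) ^ α with hB
  have hK0 : 0 ≤ K := by positivity
  have hB0 : 0 ≤ B := by positivity
  have hU : 0 < Υ ^ α := Real.rpow_pos_of_pos hΥ α
  refine ⟨(1 + q * (K + B)) / Υ ^ α, by positivity, ?_⟩
  intro k hk σ hσ ω hω hclu hdom
  set a : Fin q := ⟨0, by omega⟩ with ha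
  set b : Fin q := ⟨1, by omega⟩ with hb
  set c : Fin q := ⟨2, by omega⟩ with hc
  set M : ℝ := max (((k c : ℕ) : ℝ) ^ α) (((k a : ℕ) : ℝ) ^ (α - 1)) with hM
  have hk1 : ∀ i, (1 : ℝ) ≤ ((k i : ℕ) : ℝ) := fun i => by exact_mod_cast (k i).pos
  have hanti : ∀ i j, i ≤ j → ((k j : ℕ) : ℝ) ≤ ((k i : ℕ) : ℝ) := fun i j hij => by
    exact_mod_cast hk hij
  have hM1 : 1 ≤ M := (Real.one_le_rpow (hk1 c) hα.le).trans (le_max_left _ _)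
  have hσabs : ∀ i, |σ i| = 1 := fun i => by rcases hσ i with h | h <;> simp [h]
  -- the main part of each term: kept for the dominant pair, zero for the other indices
  let d : Fin q → ℝ := fun i =>
    if i = a ∨ i = b then σ i * (Υ ^ α * ((k i : ℕ) : ℝ) ^ α) else 0
  have hab : a ≠ b := by simp [ha, hb]
  have hd : ∑ i, d i
      = Υ ^ α * (σ a * ((k a : ℕ) : ℝ) ^ α + σ b * ((k b : ℕ) : ℝ) ^ α) := by
    rw [Fintype.sum_eq_add a b hab (fun i hi => by simp [d, hi.1, hi.2])]
    simp only [d, true_or, or_true, if_true]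
    ring
  have hterm : ∀ i, |σ i * ω i - d i| ≤ (K + B) * M := by
    intro i
    by_cases hi : i = a ∨ i = b
    · have h1 := abs_frequency_sub_le hα hΥ hC₀ (hk1 i) (hω i) (hclu i)
      have h2 := max_one_rpow_le (s := Υ + C₀) (by positivity) (hk1 i)
        (hanti a i (Fin.mk_le_of_le_val (Nat.zero_le _))) hM1 (le_max_right _ _)
      have h3 : α * C₀ * max 1 (((Υ + C₀) * ((k i : ℕ) : ℝ)) ^ (α - 1))
          ≤ α * C₀ * ((1 + (Υ + C₀) ^ (α - 1)) * M) := by gcongr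
      have h4 : C₀ ^ α ≤ C₀ ^ α * M := le_mul_of_one_le_right (by positivity) hM1
      have h5 : 0 ≤ B * M := by positivity
      simp only [d, if_pos hi]
      rw [← mul_sub, abs_mul, hσabs, one_mul]
      calc _ ≤ _ := h1
        _ ≤ K * M := by rw [hK]; linarith
        _ ≤ (K + B) * M := by linarith
    · have hci : c ≤ i := by
        simp only [ha, hb, hc, Fin.ext_iff, Fin.le_def] at hi ⊢
        omega
      have h1 := frequency_le hα hΥ hC₀ (hk1 i) (hω i) (hclu i)
      have h2 : ((k i : ℕ) : ℝ) ^ α ≤ M :=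
        (Real.rpow_le_rpow (by positivity) (hanti c i hci) hα.le).trans (le_max_left _ _)
      have h3 : B * ((k i : ℕ) : ℝ) ^ α ≤ B * M := by gcongr
      have h4 : 0 ≤ K * M := by positivity
      simp only [d, if_neg hi]
      rw [sub_zero, abs_mul, hσabs, one_mul, abs_of_pos (hω i)]
      linarith
  have herr : |∑ i, σ i * ω i - ∑ i, d i| ≤ q * ((K + B) * M) := by
    rw [← Finset.sum_sub_distrib]
    calc _ ≤ ∑ i, |σ i * ω i - d i| := Finset.abs_sum_le_sum_abs _ _
      _ ≤ ∑ _i : Fin q, (K + B) * M := Finset.sum_le_sum fun i _ => hterm i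
      _ = _ := by simp
  have hmain : (1 + q * (K + B)) * M ≤ |∑ i, d i| := by
    rw [hd, abs_mul, abs_of_pos hU]
    calc _ = Υ ^ α * ((1 + q * (K + B)) / Υ ^ α * M) := by field_simp
      _ ≤ _ := by gcongr
  have htri := abs_sub_abs_le_abs_sub (∑ i, d i) (∑ i, σ i * ω i)
  rw [abs_sub_comm] at htri
  linarith
end
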